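/- arXiv:1512.08053 — 2 statements merged into one kernel-verified Lean document; each statement's English description precedes it below -/
import Mathlib

section
/- Let S = k[y_0,...,y_n] and R = k[y_0,...,y_n], and let φ: S → R be the k-algebra map y_i ↦ f_i where f_0,...,f_n is an R-regular sequence of homogeneous elements of the same positive degree d. If I ⊆ S is a homogeneous ideal and f ∈ S is a nonzero homogeneous element with f ∉ I, then φ(f) ∉ φ_*(I) whenever every homogeneous generator of the ideal (f) ∩ I of S has degree strictly greater than deg(f). -/
open MvPolynomial

/-- A homogeneous ideal: one generated by homogeneous elements. -/
def IsHomogIdeal {σ R : Type*} [CommSemiring R] (I : Ideal (MvPolynomial σ R)) : Prop :=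
  ∃ G : Set (MvPolynomial σ R), Ideal.span G = I ∧ ∀ g ∈ G, ∃ d, g.IsHomogeneous d

/-!
Let `φ` map the variables to a regular sequence `f` of homogeneous elements of positive degrees in a
graded `k`-algebra `A`. Choose homogeneous elements of `A` whose classes form a `k`-basis of
`A / (f)`. By graded Nakayama they generate `A` over `S = k[y]`. They are also linearly independent
over `S`: independence lifts step by step from `A / (f₁, …, fᵢ₊₁)` to `A / (f₁, …, fᵢ)`, since in a
relation all coefficients are divisible by `yᵢ₊₁` modulo `(y₁, …, yᵢ)`, and `fᵢ₊₁` can be cancelled.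
So `A` is free over `S`, hence faithfully flat, and every ideal of `S` is the contraction of its
extension to `A`.
-/

section LinearIndependentMod

variable {S M ι : Type*} [CommRing S] [AddCommGroup M] [Module S M]

/-- A family `v` in `M` is linearly independent modulo the ideal `J` if its image in `M / JM` is
linearly independent over `S / J`. The condition is spelled out on elements of `S` and `M`, so that
`J` can vary along a regular sequence without changing the ring or the module. -/
def LinearIndependentMod (J : Ideal S) (v : ι → M) : Prop :=
  ∀ (s : Finset ι) (c : ι → S), ∑ i ∈ s, c i • v i ∈ (J • ⊤ : Submodule S M) → ∀ i ∈ s, c i ∈ J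

theorem linearIndependentMod_bot {v : ι → M} :
    LinearIndependentMod (⊥ : Ideal S) v ↔ LinearIndependent S v := by
  simp only [LinearIndependentMod, Submodule.bot_smul, Submodule.mem_bot, linearIndependent_iff']

namespace LinearIndependentMod

variable {J : Ideal S} {x : S} {v : ι → M}

theorem exists_sub_mul_mem (hv : LinearIndependentMod (J ⊔ Ideal.span {x}) v)
    (hx : IsSMulRegular (M ⧸ (J • ⊤ : Submodule S M)) x) {s : Finset ι} {c : ι → S}
    (hc : ∑ i ∈ s, c i • v i ∈ (J • ⊤ : Submodule S M)) :
    ∃ c' : ι → S, (∀ i ∈ s, c i - x * c' i ∈ J) ∧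
      ∑ i ∈ s, c' i • v i ∈ (J • ⊤ : Submodule S M) := by
  have hmem : ∀ i ∈ s, c i ∈ J ⊔ Ideal.span {x} :=
    hv s c (Submodule.smul_mono_left le_sup_left hc)
  have hdiv : ∀ i ∈ s, ∃ b, c i - x * b ∈ J := fun i hi ↦ by
    obtain ⟨a, ha, y, hy, hay⟩ := Submodule.mem_sup.1 (hmem i hi)
    obtain ⟨b, rfl⟩ := Ideal.mem_span_singleton'.1 hy
    exact ⟨b, by rwa [← hay, mul_comm x b, add_sub_cancel_right]⟩
  choose! c' hc' using hdiv
  refine ⟨c', hc', ?_⟩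
  have hdiff : ∑ i ∈ s, (c i - x * c' i) • v i ∈ (J • ⊤ : Submodule S M) :=
    sum_mem fun i hi ↦ Submodule.smul_mem_smul (hc' i hi) trivial
  have hsmul : x • ∑ i ∈ s, c' i • v i ∈ (J • ⊤ : Submodule S M) := by
    convert! sub_mem hc hdiff using 1
    simp only [sub_smul, mul_smul, Finset.sum_sub_distrib, Finset.smul_sum, sub_sub_cancel]
  rw [← Submodule.Quotient.mk_eq_zero, Submodule.Quotient.mk_smul] at hsmul
  exact (Submodule.Quotient.mk_eq_zero _).1 (hx.right_eq_zero_of_smul hsmul)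

-- `hsep` says that `S / J` is `x`-adically separated: dividing a relation by `x` again and again
-- puts its coefficients in every `J + (x ^ n)`.
theorem of_sup_span_singleton (hv : LinearIndependentMod (J ⊔ Ideal.span {x}) v)
    (hx : IsSMulRegular (M ⧸ (J • ⊤ : Submodule S M)) x)
    (hsep : ⨅ n : ℕ, J ⊔ Ideal.span {x ^ n} ≤ J) : LinearIndependentMod J v := by
  have hpow : ∀ (n : ℕ) (s : Finset ι) (c : ι → S),
      ∑ i ∈ s, c i • v i ∈ (J • ⊤ : Submodule S M) →
        ∀ i ∈ s, c i ∈ J ⊔ Ideal.span {x ^ n} := by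
    intro n
    induction n with
    | zero => simp
    | succ n ih =>
      intro s c hc i hi
      obtain ⟨c', hsub, hc'⟩ := hv.exists_sub_mul_mem hx hc
      have hmul : x * c' i ∈ J ⊔ Ideal.span {x ^ (n + 1)} := by
        have := Ideal.mul_mem_mul (Ideal.mem_span_singleton_self x) (ih s c' hc' i hi)
        rw [Ideal.mul_sup, Ideal.span_singleton_mul_span_singleton, ← pow_succ'] at this
        exact sup_le_sup_right (Ideal.mul_le_right : Ideal.span {x} * J ≤ J) _ this
      simpa only [sub_add_cancel] using add_mem (Ideal.mem_sup_left (hsub i hi)) hmul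
  exact fun s c hc i hi ↦ hsep (Submodule.mem_iInf _ |>.2 fun n ↦ hpow n s c hc i hi)

open RingTheory.Sequence in
theorem linearIndependent_of_isWeaklyRegular {rs : List S}
    (hv : LinearIndependentMod (Ideal.ofList rs) v) (hrs : IsWeaklyRegular M rs)
    (hsep : ∀ (i : ℕ) (hi : i < rs.length),
      ⨅ n : ℕ, Ideal.ofList (rs.take i) ⊔ Ideal.span {rs[i] ^ n} ≤ Ideal.ofList (rs.take i)) :
    LinearIndependent S v := by
  have htake : LinearIndependentMod (Ideal.ofList (rs.take 0)) v := by
    refine Nat.decreasingInduction (motive := fun i _ ↦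
      LinearIndependentMod (Ideal.ofList (rs.take i)) v) (fun i hi ih ↦ ?_) ?_ rs.length.zero_le
    · rw [← List.take_concat_get' rs i hi, Ideal.ofList_append, Ideal.ofList_singleton] at ih
      exact ih.of_sup_span_singleton (hrs.regular_mod_prev i hi) (hsep i hi)
    · rwa [List.take_length]
  rwa [List.take_zero, Ideal.ofList_nil, linearIndependentMod_bot] at htake

end LinearIndependentMod

end LinearIndependentMod

section MvPolynomial

theorem iInf_span_X_image_sup_span_X_pow_le {k σ : Type*} [CommSemiring k] (s : Set σ) (i : σ) :
    ⨅ n : ℕ, Ideal.span (X '' s) ⊔ Ideal.span {X i ^ n} ≤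
      Ideal.span (X '' s : Set (MvPolynomial σ k)) := by
  intro p hp
  rw [mem_ideal_span_X_image]
  intro μ hμ
  have hspan : Ideal.span (X '' s) ⊔ Ideal.span {X i ^ (μ i + 1)} =
      Ideal.span ((fun ν ↦ monomial ν (1 : k)) ''
        ((fun j ↦ Finsupp.single j 1) '' s ∪ {Finsupp.single i (μ i + 1)})) := by
    rw [← Ideal.span_union, Set.image_union, Set.image_image, Set.image_singleton,
      X_pow_eq_monomial]
    rfl
  have hpn := (Submodule.mem_iInf _).1 hp (μ i + 1)
  rw [hspan, mem_ideal_span_monomial_image] at hpn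
  obtain ⟨_, ⟨j, hj, rfl⟩ | rfl, hle⟩ := hpn μ hμ
  · exact ⟨j, hj, Nat.one_le_iff_ne_zero.1 (Finsupp.single_le_iff.1 hle)⟩
  · exact absurd (Finsupp.single_le_iff.1 hle) (Nat.not_succ_le_self _)

theorem ofList_take_ofFn_X {k : Type*} [CommSemiring k] {m : ℕ} (i : ℕ) :
    Ideal.ofList ((List.ofFn (X : Fin m → MvPolynomial (Fin m) k)).take i) =
      Ideal.span (X '' {j : Fin m | (j : ℕ) < i}) := by
  rw [Ideal.ofList]
  congr 1
  ext p
  simp only [Set.mem_ofPred_eq, List.mem_take_iff_getElem, List.getElem_ofFn, List.length_ofFn,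
    lt_min_iff, Set.mem_image]
  exact ⟨fun ⟨j, hj, h⟩ ↦ ⟨⟨j, hj.2⟩, hj.1, h⟩, fun ⟨j, hj, h⟩ ↦ ⟨j, ⟨hj, j.2⟩, h⟩⟩

variable {k : Type*} [CommRing k]

theorem sub_C_constantCoeff_mem_idealOfVars {σ : Type*} (p : MvPolynomial σ k) :
    p - C (constantCoeff p) ∈ idealOfVars σ k := by
  rw [← pow_one (idealOfVars σ k), mem_pow_idealOfVars_iff']
  intro μ hμ
  simp [(Finsupp.degree_eq_zero_iff μ).1 (Nat.lt_one_iff.1 hμ), constantCoeff_eq]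

theorem linearIndependentMod_idealOfVars {σ M ι : Type*} [AddCommGroup M] [Module k M]
    [Module (MvPolynomial σ k) M] [IsScalarTower k (MvPolynomial σ k) M] {v : ι → M}
    (hv : LinearIndependent k
      ((idealOfVars σ k • ⊤ : Submodule (MvPolynomial σ k) M).mkQ ∘ v)) :
    LinearIndependentMod (idealOfVars σ k) v := by
  intro s c hc i hi
  have hdiff : ∑ i ∈ s, (c i - C (constantCoeff (c i))) • v i ∈
      (idealOfVars σ k • ⊤ : Submodule (MvPolynomial σ k) M) :=
    sum_mem fun i _ ↦ Submodule.smul_mem_smul (sub_C_constantCoeff_mem_idealOfVars _) trivial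
  have hconst : ∑ i ∈ s, constantCoeff (c i) • v i ∈
      (idealOfVars σ k • ⊤ : Submodule (MvPolynomial σ k) M) := by
    convert! sub_mem hc hdiff using 1
    simp only [sub_smul, Finset.sum_sub_distrib, sub_sub_cancel, ← algebraMap_eq,
      algebraMap_smul]
  have hzero : constantCoeff (c i) = 0 := by
    refine linearIndependent_iff'.1 hv s (fun i ↦ constantCoeff (c i)) ?_ i hi
    rw [← Submodule.Quotient.mk_eq_zero] at hconst
    rw [← hconst, ← Submodule.mkQ_apply]
    simp
  simpa [hzero] using sub_C_constantCoeff_mem_idealOfVars (c i)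

theorem linearIndependent_of_isWeaklyRegular_X {m : ℕ} {M ι : Type*} [AddCommGroup M] [Module k M]
    [Module (MvPolynomial (Fin m) k) M] [IsScalarTower k (MvPolynomial (Fin m) k) M] {v : ι → M}
    (hX : RingTheory.Sequence.IsWeaklyRegular M
      (List.ofFn (X : Fin m → MvPolynomial (Fin m) k)))
    (hv : LinearIndependent k
      ((idealOfVars (Fin m) k • ⊤ : Submodule (MvPolynomial (Fin m) k) M).mkQ ∘ v)) :
    LinearIndependent (MvPolynomial (Fin m) k) v := by
  have hvars : Ideal.ofList (List.ofFn X) = idealOfVars (Fin m) k := by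
    simp only [Ideal.ofList, List.mem_ofFn', Set.ofPred_mem_eq]
  refine LinearIndependentMod.linearIndependent_of_isWeaklyRegular
    (hvars ▸ linearIndependentMod_idealOfVars hv) hX fun i hi ↦ ?_
  rw [ofList_take_ofFn_X, List.getElem_ofFn]
  exact iInf_span_X_image_sup_span_X_pow_le _ _

end MvPolynomial

section Graded

open DirectSum

-- Graded Nakayama: an element of degree `N` is, modulo `V`, a combination of the `f i` with
-- coefficients of degrees `N - d i < N`.
theorem eq_top_of_mul_mem_of_exists_sub_mem_span {A 𝓢 τ : Type*} [CommRing A] [SetLike 𝓢 A]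
    [AddSubgroupClass 𝓢 A] (𝒜 : ℕ → 𝓢) [GradedRing 𝒜] {f : τ → A} {d : τ → ℕ}
    (hd : ∀ i, 0 < d i) (hf : ∀ i, f i ∈ 𝒜 (d i)) {V W : AddSubmonoid A}
    (hV : SetLike.IsHomogeneous 𝒜 V) (hVW : V ≤ W) (hW : ∀ i, ∀ w ∈ W, w * f i ∈ W)
    (hsub : ∀ a, ∃ v ∈ V, a - v ∈ Ideal.span (Set.range f)) : W = ⊤ := by
  have hcomp : ∀ N a, (decompose 𝒜 a N : A) ∈ W := by
    intro N
    induction N using Nat.strong_induction_on with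
    | _ N ih =>
      have hmul : ∀ i b, (decompose 𝒜 (b * f i) N : A) ∈ W := by
        intro i b
        rw [coe_decompose_mul_of_right_mem 𝒜 N (hf i)]
        split_ifs with hN
        · exact hW i _ (ih _ (Nat.sub_lt ((hd i).trans_le hN) (hd i)) b)
        · exact zero_mem W
      intro a
      obtain ⟨v, hv, hav⟩ := hsub a
      obtain ⟨c, hc⟩ := Finsupp.mem_ideal_span_range_iff_exists_finsupp.1 hav
      rw [← GradedRing.proj_apply, ← sub_add_cancel a v, ← hc, map_add, Finsupp.sum, map_sum]
      exact add_mem (sum_mem fun i _ ↦ hmul i (c i)) (hVW (hV N hv))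
  refine eq_top_iff.2 fun a _ ↦ ?_
  induction a using Decomposition.inductionOn 𝒜 with
  | zero => exact zero_mem W
  | @homogeneous N a => simpa only [decompose_coe, of_eq_same] using hcomp N a
  | add a b ha hb => exact add_mem (ha trivial) (hb trivial)

theorem isHomogeneous_span {k M ι : Type*} [DecidableEq ι] [Semiring k] [AddCommMonoid M]
    [Module k M] (ℳ : ι → Submodule k M) [Decomposition ℳ] {t : Set M}
    (ht : ∀ a ∈ t, SetLike.IsHomogeneousElem ℳ a) :
    SetLike.IsHomogeneous ℳ (Submodule.span k t) := by
  intro N a ha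
  induction ha using Submodule.span_induction with
  | mem a hat =>
    obtain ⟨e, he⟩ := ht a hat
    obtain rfl | hne := eq_or_ne e N
    · rw [decompose_of_mem_same ℳ he]
      exact Submodule.subset_span hat
    · rw [decompose_of_mem_ne ℳ he hne]
      exact zero_mem _
  | zero => simp
  | add a b _ _ ha hb => simpa using add_mem ha hb
  | smul r a _ ha => simpa [DirectSum.smul_apply] using Submodule.smul_mem _ r ha

theorem span_setOf_isHomogeneousElem {k M ι : Type*} [DecidableEq ι] [Semiring k] [AddCommMonoid M]
    [Module k M] (ℳ : ι → Submodule k M) [Decomposition ℳ] :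
    Submodule.span k {a : M | SetLike.IsHomogeneousElem ℳ a} = ⊤ := by
  refine eq_top_iff.2 fun a _ ↦ ?_
  induction a using Decomposition.inductionOn ℳ with
  | zero => exact zero_mem _
  | @homogeneous N a => exact Submodule.subset_span ⟨N, a.2⟩
  | add a b ha hb => exact add_mem (ha trivial) (hb trivial)

variable {k A ι : Type*} {m : ℕ} [CommRing A]

theorem span_range_eq_top_of_span_mkQ_eq_top {σ : Type*} [CommRing k] [Algebra k A]
    [Algebra (MvPolynomial σ k) A] [IsScalarTower k (MvPolynomial σ k) A]
    (𝒜 : ℕ → Submodule k A) [GradedAlgebra 𝒜] {d : σ → ℕ} (hd : ∀ i, 0 < d i)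
    (hX : ∀ i, algebraMap (MvPolynomial σ k) A (X i) ∈ 𝒜 (d i)) {v : ι → A}
    (hv : ∀ i, SetLike.IsHomogeneousElem 𝒜 (v i))
    (hspan : Submodule.span k (Set.range
      ((idealOfVars σ k • ⊤ : Submodule (MvPolynomial σ k) A).mkQ ∘ v)) = ⊤) :
    Submodule.span (MvPolynomial σ k) (Set.range v) = ⊤ := by
  set N : Submodule (MvPolynomial σ k) A := idealOfVars σ k • ⊤ with hN
  have hNspan : ∀ a, a ∈ N ↔ a ∈ Ideal.span
      (Set.range fun i ↦ algebraMap (MvPolynomial σ k) A (X i)) := fun a ↦ by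
    rw [hN, Ideal.smul_top_eq_map, idealOfVars, Ideal.map_span, ← Set.range_comp]
    rfl
  refine Submodule.toAddSubmonoid_injective <| eq_top_of_mul_mem_of_exists_sub_mem_span 𝒜 hd hX
    (V := (Submodule.span k (Set.range v)).toAddSubmonoid)
    (isHomogeneous_span 𝒜 (Set.forall_mem_range.2 hv))
    (Submodule.span_le_restrictScalars k (MvPolynomial σ k) (Set.range v)) ?_ ?_
  · intro i w hw
    rw [mul_comm, ← Algebra.smul_def]
    exact Submodule.smul_mem _ (X i) hw
  · intro a
    have ha : N.mkQ a ∈ (Submodule.span k (Set.range v)).map (N.mkQ.restrictScalars k) := by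
      rw [Submodule.map_span, ← Set.range_comp]
      exact hspan.ge trivial
    obtain ⟨w, hw, hwa⟩ := ha
    exact ⟨w, hw, (hNspan _).1 ((Submodule.Quotient.eq N).1 hwa.symm)⟩

theorem free_of_isWeaklyRegular_X [Field k] [Algebra k A]
    [Algebra (MvPolynomial (Fin m) k) A] [IsScalarTower k (MvPolynomial (Fin m) k) A]
    (𝒜 : ℕ → Submodule k A) [GradedAlgebra 𝒜] {d : Fin m → ℕ} (hd : ∀ i, 0 < d i)
    (hX : ∀ i, algebraMap (MvPolynomial (Fin m) k) A (X i) ∈ 𝒜 (d i))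
    (hreg : RingTheory.Sequence.IsWeaklyRegular A
      (List.ofFn (X : Fin m → MvPolynomial (Fin m) k))) :
    Module.Free (MvPolynomial (Fin m) k) A := by
  set N : Submodule (MvPolynomial (Fin m) k) A := idealOfVars (Fin m) k • ⊤
  obtain ⟨κ, a, -, hspan, hind⟩ := exists_linearIndependent' k
    (N.mkQ ∘ ((↑) : {a : A | SetLike.IsHomogeneousElem 𝒜 a} → A))
  have hhom : Submodule.span k (Set.range
      (N.mkQ ∘ ((↑) : {a : A | SetLike.IsHomogeneousElem 𝒜 a} → A))) = ⊤ := by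
    rw [Set.range_comp, Subtype.range_coe]
    change Submodule.span k (N.mkQ.restrictScalars k '' _) = ⊤
    rw [← Submodule.map_span, span_setOf_isHomogeneousElem, Submodule.map_top]
    exact LinearMap.range_eq_top.2 N.mkQ_surjective
  exact .of_basis <| .mk (linearIndependent_of_isWeaklyRegular_X hreg hind)
    (span_range_eq_top_of_span_mkQ_eq_top 𝒜 hd hX (fun i ↦ (a i).2) (hspan.trans hhom)).ge

theorem faithfullyFlat_aeval [Field k] [Nontrivial A] [Algebra k A]
    (𝒜 : ℕ → Submodule k A) [GradedAlgebra 𝒜] {f : Fin m → A} {d : Fin m → ℕ}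
    (hd : ∀ i, 0 < d i) (hf : ∀ i, f i ∈ 𝒜 (d i))
    (hreg : RingTheory.Sequence.IsWeaklyRegular A (List.ofFn f)) :
    (aeval f : MvPolynomial (Fin m) k →ₐ[k] A).toRingHom.FaithfullyFlat := by
  algebraize [(aeval f : MvPolynomial (Fin m) k →ₐ[k] A).toRingHom]
  have hX : ∀ i, algebraMap (MvPolynomial (Fin m) k) A (X i) = f i := aeval_X f
  have hregX : RingTheory.Sequence.IsWeaklyRegular A
      (List.ofFn (X : Fin m → MvPolynomial (Fin m) k)) := by
    rw [← RingTheory.Sequence.isWeaklyRegular_map_algebraMap_iff A A, List.map_ofFn]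
    rwa [show algebraMap (MvPolynomial (Fin m) k) A ∘ X = f from funext hX]
  have := free_of_isWeaklyRegular_X 𝒜 hd (fun i ↦ (hX i).symm ▸ hf i) hregX
  exact (inferInstance : Module.FaithfullyFlat (MvPolynomial (Fin m) k) A)

end Graded

theorem comap_map_eq_self_of_ringHom_faithfullyFlat {R S : Type*} [CommRing R] [CommRing S]
    {φ : R →+* S} (hφ : φ.FaithfullyFlat) (I : Ideal R) : (I.map φ).comap φ = I := by
  algebraize [φ]
  exact I.comap_map_eq_self_of_faithfullyFlat

theorem stmt5_general {k A : Type*} [Field k] [CommRing A] [Nontrivial A] [Algebra k A]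
    (𝒜 : ℕ → Submodule k A) [GradedAlgebra 𝒜] {m : ℕ} {f : Fin m → A} {d : Fin m → ℕ}
    (hd : ∀ i, 0 < d i) (hf : ∀ i, f i ∈ 𝒜 (d i))
    (hreg : RingTheory.Sequence.IsWeaklyRegular A (List.ofFn f))
    {I : Ideal (MvPolynomial (Fin m) k)} {p : MvPolynomial (Fin m) k} (hpI : p ∉ I) :
    aeval f p ∉ I.map (aeval (R := k) f) := by
  have hflat := faithfullyFlat_aeval 𝒜 hd hf hreg
  rwa [← comap_map_eq_self_of_ringHom_faithfullyFlat hflat I] at hpI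

/-- Let `φ : S → R`, `y_i ↦ f_i`, for a regular sequence of homogeneous elements
of the same positive degree `d`. If `I ⊆ S` is a homogeneous ideal and `p ∈ S` is a nonzero
homogeneous element with `p ∉ I`, then `φ(p) ∉ φ_*(I)` whenever `(p) ∩ I` admits a homogeneous
generating set all of whose elements have degree strictly greater than `deg p`. -/
theorem stmt5 (k : Type*) [Field k] (n : ℕ) (f : Fin (n + 1) → MvPolynomial (Fin (n + 1)) k)
    (d : ℕ) (hd : 0 < d) (hhom : ∀ i, (f i).IsHomogeneous d)
    (hreg : RingTheory.Sequence.IsRegular (MvPolynomial (Fin (n + 1)) k) (List.ofFn f))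
    (I : Ideal (MvPolynomial (Fin (n + 1)) k)) (hI : IsHomogIdeal I)
    (p : MvPolynomial (Fin (n + 1)) k) (e : ℕ) (hp : p.IsHomogeneous e) (hp0 : p ≠ 0)
    (hpI : p ∉ I)
    (hgen : ∃ G : Set (MvPolynomial (Fin (n + 1)) k),
      Ideal.span G = Ideal.span {p} ⊓ I ∧ ∀ g ∈ G, ∃ e', g.IsHomogeneous e' ∧ e < e') :
    MvPolynomial.aeval f p ∉ Ideal.map (MvPolynomial.aeval (R := k) f) I := by
  let _ : GradedAlgebra (homogeneousSubmodule (Fin (n + 1)) k) := gradedAlgebra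
  exact stmt5_general (homogeneousSubmodule _ k) (fun _ ↦ hd) hhom hreg.toIsWeaklyRegular hpI
end

section
/- Let I = (x(y^3−z^3), y(x^3−z^3), z(x^3−y^3)) ⊆ C[x,y,z] and let φ: C[x,y,z] → C[x,y,z] be the C-algebra map x ↦ x^2+y^2, y ↦ y^2+z^2, z ↦ x^2+z^2. Then the ideal φ_*(I) = (f(g^3−h^3), g(f^3−h^3), h(f^3−g^3)), with f = x^2+y^2, g = y^2+z^2, h = x^2+z^2, satisfies φ_*(I)^{(3)} ⊄ φ_*(I)^2. -/
/-!
The witness is the product of the `3n` Fermat lines, `n = 3`, pulled back along `φ`.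

The map `φ` is faithfully flat: it is a linear change of coordinates followed by `xᵢ ↦ xᵢ²`, which
makes the polynomial ring a free module over itself. Flatness transports to `f, g, h` the
regularity of the coordinates, and faithful flatness reflects ideal membership.

The ideal `φ_*(I)` is the intersection of `(fⁿ - gⁿ, gⁿ - hⁿ)`, `(f, g)`, `(g, h)` and `(f, h)`.
Modulo each of these one of `f, g, h` is a nonzerodivisor, so no associated prime of `φ_*(I)`
contains all three. At a prime missing one of them the product of the lines lies locally in the
cube of `φ_*(I)`, hence it lies in the third symbolic power.

It remains to see that the product of the lines in the coordinates is not in `I²`. Modulo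
`(xⁿ⁺¹, yz, y²ⁿ + z²ⁿ)` the ideal `I²` vanishes, whereas the product of the lines becomes
`2xⁿz²ⁿ`, which is nonzero.
-/

open MvPolynomial

/-- The `m`-th symbolic power `I^(m) = ⋂_{P ∈ Ass(R/I)} (I^m R_P ∩ R)`. -/
noncomputable def symbolicPower {R : Type*} [CommRing R] (I : Ideal R) (m : ℕ) : Ideal R :=
  ⨅ (P : Ideal R) (hP : P ∈ associatedPrimes R (R ⧸ I)),
    letI : P.IsPrime := hP.1
    Ideal.comap (algebraMap R (Localization.AtPrime P))
      (Ideal.map (algebraMap R (Localization.AtPrime P)) (I ^ m))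

section SymbolicPower

variable {R : Type*} [CommRing R] {J : Ideal R}

theorem mem_symbolicPower_iff {m : ℕ} {w : R} :
    w ∈ symbolicPower J m ↔
      ∀ P ∈ associatedPrimes R (R ⧸ J), ∃ s ∉ P, s * w ∈ J ^ m := by
  simp only [symbolicPower, Ideal.mem_iInf]
  refine forall₂_congr fun P hP => ?_
  have : P.IsPrime := hP.1
  exact IsLocalization.algebraMap_mem_map_algebraMap_iff P.primeCompl _ _ _

theorem le_of_mem_associatedPrimes_quotient {P : Ideal R}
    (hP : P ∈ associatedPrimes R (R ⧸ J)) : J ≤ P :=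
  (Submodule.annihilator_top.trans Ideal.annihilator_quotient).ge.trans hP.annihilator_le

theorem not_subset_of_mem_associatedPrimes_quotient {T : Set R}
    (hT : ∀ u, (∀ r ∈ T, ∃ N : ℕ, r ^ N * u ∈ J) → u ∈ J) {P : Ideal R}
    (hP : P ∈ associatedPrimes R (R ⧸ J)) : ¬ T ⊆ P := by
  intro hTP
  obtain ⟨x, hx⟩ := hP.eq_radical_colon
  obtain ⟨u, rfl⟩ := Ideal.Quotient.mk_surjective x
  have mem_iff (r : R) : r ∈ P ↔ ∃ N : ℕ, r ^ N * u ∈ J := by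
    simp only [hx, Ideal.mem_radical_iff, Submodule.mem_colon_singleton, Submodule.mem_bot,
      Algebra.smul_def, Ideal.Quotient.algebraMap_eq, ← map_mul, Ideal.Quotient.eq_zero_iff_mem]
  have hu : u ∈ J := hT u fun r hr => (mem_iff r).1 (hTP hr)
  exact hP.1.ne_top <| P.eq_top_iff_one.2 <| (mem_iff 1).2 ⟨0, by simpa using hu⟩

end SymbolicPower

section FermatIdeal

variable {A : Type*} [CommRing A]

/-- The Fermat ideal of exponent `n` in the parameters `f, g, h`; for `n ≥ 3` and the coordinates of
`ℙ²` over `ℂ` it defines the `n² + 3` points where at least three lines of `fermatLines` meet. -/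
def fermatIdeal (n : ℕ) (f g h : A) : Ideal A :=
  Ideal.span {f * (g ^ n - h ^ n), g * (f ^ n - h ^ n), h * (f ^ n - g ^ n)}

/-- The product of the `3n` lines of the Fermat arrangement, evaluated at `f, g, h`. -/
def fermatLines (n : ℕ) (f g h : A) : A :=
  (f ^ n - g ^ n) * (g ^ n - h ^ n) * (f ^ n - h ^ n)

variable {B : Type*} [CommRing B] (n : ℕ) (f g h : A)

theorem map_fermatIdeal (φ : A →+* B) :
    (fermatIdeal n f g h).map φ = fermatIdeal n (φ f) (φ g) (φ h) := by
  simp only [fermatIdeal, Ideal.map_span, Set.image_insert_eq, Set.image_singleton, map_mul,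
    map_sub, map_pow]

theorem map_fermatLines (φ : A →+* B) :
    φ (fermatLines n f g h) = fermatLines n (φ f) (φ g) (φ h) := by
  simp only [fermatLines, map_mul, map_sub, map_pow]

theorem fermatIdeal_rotate : fermatIdeal n g h f = fermatIdeal n f g h := by
  have h₁ : g * (h ^ n - f ^ n) = -(g * (f ^ n - h ^ n)) := by ring
  have h₂ : h * (g ^ n - f ^ n) = -(h * (f ^ n - g ^ n)) := by ring
  simp only [fermatIdeal, Ideal.span_insert, h₁, h₂, Ideal.span_singleton_neg]
  ac_rfl

theorem fermatLines_rotate : fermatLines n g h f = fermatLines n f g h := by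
  simp only [fermatLines]
  ring

variable {n f g h}

theorem fermatIdeal_le_iff {I : Ideal A} :
    fermatIdeal n f g h ≤ I ↔
      f * (g ^ n - h ^ n) ∈ I ∧ g * (f ^ n - h ^ n) ∈ I ∧ h * (f ^ n - g ^ n) ∈ I := by
  simp only [fermatIdeal, Ideal.span_le, Set.insert_subset_iff, Set.singleton_subset_iff,
    SetLike.mem_coe]

end FermatIdeal

section Cube

variable {A : Type*} [CommRing A] {n : ℕ} {f g h : A}

theorem mul_fermatLines_mem_fermatIdeal_cube :
    f * g * h * fermatLines n f g h ∈ fermatIdeal n f g h ^ 3 := by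
  obtain ⟨hf, hg, hh⟩ := fermatIdeal_le_iff.1 (le_refl (fermatIdeal n f g h))
  convert Ideal.mul_mem_mul (Ideal.mul_mem_mul hf hg) hh using 1
  · rw [← pow_two, ← pow_succ]
  · simp only [fermatLines]
    ring

-- With `n = k + 3`, the factor `f ^ n - g ^ n` splits this into a multiple of the cube of
-- `f * (g ^ n - h ^ n)` minus a multiple of the cube of `g * (f ^ n - h ^ n)`.
theorem sq_mul_fermatLines_mem_fermatIdeal_cube (hn : 3 ≤ n) :
    ((f ^ n - h ^ n) * (g ^ n - h ^ n)) ^ 2 * fermatLines n f g h ∈ fermatIdeal n f g h ^ 3 := by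
  obtain ⟨hf, hg, -⟩ := fermatIdeal_le_iff.1 (le_refl (fermatIdeal n f g h))
  obtain ⟨k, rfl⟩ := Nat.exists_eq_add_of_le' hn
  convert sub_mem
    (Ideal.mul_mem_left _ (f ^ k * (f ^ (k + 3) - h ^ (k + 3)) ^ 3) (Ideal.pow_mem_pow hf 3))
    (Ideal.mul_mem_left _ (g ^ k * (g ^ (k + 3) - h ^ (k + 3)) ^ 3) (Ideal.pow_mem_pow hg 3))
    using 1
  simp only [fermatLines]
  ring

theorem eq_zero_of_fermatIdeal_le_bot [IsReduced A] (hn : n ≠ 0)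
    (hI : fermatIdeal n f g h ≤ ⊥) (hfgh : f * g * h = 0)
    (hf : (g ^ n - f ^ n) * (h ^ n - f ^ n) = 0) (hg : (h ^ n - g ^ n) * (f ^ n - g ^ n) = 0)
    (hh : (f ^ n - h ^ n) * (g ^ n - h ^ n) = 0) : f = 0 ∧ g = 0 ∧ h = 0 := by
  obtain ⟨k, rfl⟩ := Nat.exists_eq_add_one_of_ne_zero hn
  obtain ⟨hI₁, hI₂, hI₃⟩ := fermatIdeal_le_iff.1 hI
  rw [Ideal.mem_bot] at hI₁ hI₂ hI₃
  have hfg_eq : f ^ (k + 1) * g ^ (k + 1) = g ^ (k + 1) * h ^ (k + 1) := by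
    linear_combination g ^ k * hI₂
  have hfh_eq : f ^ (k + 1) * h ^ (k + 1) = g ^ (k + 1) * h ^ (k + 1) := by
    linear_combination h ^ k * hI₃
  have hgh_zero : g ^ (k + 1) * h ^ (k + 1) = 0 := by
    rw [← pow_eq_zero_iff two_ne_zero]
    linear_combination f ^ (k + 1) * (f * g * h) ^ k * hfgh -
      f ^ (k + 1) * g ^ (k + 1) * hfh_eq - g ^ (k + 1) * h ^ (k + 1) * hfg_eq
  refine ⟨?_, ?_, ?_⟩ <;> rw [← pow_eq_zero_iff (n := 2 * (k + 1)) (by lia)]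
  · linear_combination hf + hfg_eq + hfh_eq + hgh_zero
  · linear_combination hg + hfg_eq - hfh_eq + hgh_zero
  · linear_combination hh + hfh_eq - hfg_eq + hgh_zero

theorem exists_mul_fermatLines_mem_fermatIdeal_cube (hn : 3 ≤ n) {P : Ideal A} [P.IsPrime]
    (hle : fermatIdeal n f g h ≤ P) (hP : ¬ {f, g, h} ⊆ (P : Set A)) :
    ∃ s ∉ P, s * fermatLines n f g h ∈ fermatIdeal n f g h ^ 3 := by
  by_contra! H
  have mem_P {s : A} (hs : s * fermatLines n f g h ∈ fermatIdeal n f g h ^ 3) : s ∈ P :=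
    not_imp_comm.1 (H s) (not_not.2 hs)
  have rotated_mem_P {i j k : A} (hI : fermatIdeal n i j k = fermatIdeal n f g h)
      (hl : fermatLines n i j k = fermatLines n f g h) :
      (i ^ n - k ^ n) * (j ^ n - k ^ n) ∈ P :=
    Ideal.IsPrime.mem_of_pow_mem ‹_› 2 <| mem_P <|
      hI ▸ hl ▸ sq_mul_fermatLines_mem_fermatIdeal_cube hn
  have hbot : fermatIdeal n (Ideal.Quotient.mk P f) (Ideal.Quotient.mk P g)
      (Ideal.Quotient.mk P h) ≤ ⊥ := by
    rw [← map_fermatIdeal, Ideal.map_mk_eq_bot_of_le hle]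
  have hzero := eq_zero_of_fermatIdeal_le_bot (by lia) hbot
  simp only [← map_mul, ← map_pow, ← map_sub, Ideal.Quotient.eq_zero_iff_mem] at hzero
  obtain ⟨hf, hg, hh⟩ := hzero (mem_P mul_fermatLines_mem_fermatIdeal_cube)
    (rotated_mem_P (fermatIdeal_rotate ..) (fermatLines_rotate ..))
    (rotated_mem_P ((fermatIdeal_rotate ..).symm) ((fermatLines_rotate ..).symm))
    (rotated_mem_P rfl rfl)
  exact hP (by simp [Set.insert_subset_iff, hf, hg, hh])

end Cube

section Regular

variable {A : Type*} [CommRing A]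

theorem mem_of_pow_mul_mem {I : Ideal A} {a u : A} (ha : IsSMulRegular (A ⧸ I) a) {N : ℕ}
    (hu : a ^ N * u ∈ I) : u ∈ I :=
  mem_of_isSMulRegular_quotient_of_smul_mem (ha.pow N) hu

theorem isSMulRegular_quotient_of_add_mem {I : Ideal A} {r s : A} (hrs : r + s ∈ I)
    (hs : IsSMulRegular (A ⧸ I) s) : IsSMulRegular (A ⧸ I) r := by
  rw [isSMulRegular_quotient_iff_mem_of_smul_mem] at hs ⊢
  intro u hu
  refine hs u ?_
  convert sub_mem (I.mul_mem_right u hrs) hu using 1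
  simp only [smul_eq_mul]
  ring

theorem isSMulRegular_quotient_span_pair_rotate {a b c : A} (ha : IsSMulRegular A a)
    (hb : IsSMulRegular (A ⧸ Ideal.span {a}) b) (hc : IsSMulRegular (A ⧸ Ideal.span {a, b}) c) :
    IsSMulRegular (A ⧸ Ideal.span {b, c}) a := by
  rw [isSMulRegular_quotient_iff_mem_of_smul_mem] at hb hc ⊢
  simp only [smul_eq_mul, Ideal.mem_span_pair, Ideal.mem_span_singleton] at hb hc ⊢
  rintro u ⟨s, t, hu⟩
  obtain ⟨t₁, t₂, rfl⟩ := hc t ⟨u, -s, by linear_combination -hu⟩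
  obtain ⟨w, hw⟩ := hb (s + t₂ * c) ⟨u - t₁ * c, by linear_combination hu⟩
  refine ⟨w, t₁, ha ?_⟩
  simp only [smul_eq_mul]
  linear_combination hu - b * hw

theorem isSMulRegular_quotient_span_pow_sub_pow {n : ℕ} (hn : n ≠ 0) {f g h : A}
    (hf : IsSMulRegular A f) (hg : IsSMulRegular (A ⧸ Ideal.span {f}) g)
    (hh : IsSMulRegular (A ⧸ Ideal.span {f, g ^ n}) h) :
    IsSMulRegular (A ⧸ Ideal.span {f ^ n - g ^ n, g ^ n - h ^ n}) f := by
  have hspan : Ideal.span {f, f ^ n - g ^ n} = Ideal.span {f, g ^ n} := by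
    rw [← neg_sub, Ideal.span_pair_neg, ← pow_sub_one_mul hn f, Ideal.span_pair_sub_mul_left]
  have hb : f ^ n - g ^ n + g ^ n ∈ Ideal.span {f} := by
    simpa only [sub_add_cancel, Ideal.mem_span_singleton] using dvd_pow_self f hn
  have hc : g ^ n - h ^ n + h ^ n ∈ Ideal.span {f, g ^ n} :=
    Ideal.mem_span_pair.2 ⟨0, 1, by ring⟩
  refine isSMulRegular_quotient_span_pair_rotate hf
    (isSMulRegular_quotient_of_add_mem hb (hg.pow n)) ?_
  rw [hspan]
  exact isSMulRegular_quotient_of_add_mem hc (hh.pow n)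

end Regular

section Saturation

variable {A : Type*} [CommRing A] {n : ℕ} {f g h : A}

theorem fermatIdeal_le_inf (hn : n ≠ 0) :
    fermatIdeal n f g h ≤ Ideal.span {f ^ n - g ^ n, g ^ n - h ^ n} ⊓ Ideal.span {f, g} ⊓
      Ideal.span {g, h} ⊓ Ideal.span {f, h} := by
  obtain ⟨k, rfl⟩ := Nat.exists_eq_add_one_of_ne_zero hn
  refine le_inf (le_inf (le_inf ?_ ?_) ?_) ?_ <;>
    simp only [fermatIdeal_le_iff, Ideal.mem_span_pair]
  · exact ⟨⟨0, f, by ring⟩, ⟨g, g, by ring⟩, ⟨h, 0, by ring⟩⟩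
  · exact ⟨⟨g ^ (k + 1) - h ^ (k + 1), 0, by ring⟩, ⟨0, f ^ (k + 1) - h ^ (k + 1), by ring⟩,
      ⟨h * f ^ k, -(h * g ^ k), by ring⟩⟩
  · exact ⟨⟨f * g ^ k, -(f * h ^ k), by ring⟩, ⟨f ^ (k + 1) - h ^ (k + 1), 0, by ring⟩,
      ⟨0, f ^ (k + 1) - g ^ (k + 1), by ring⟩⟩
  · exact ⟨⟨g ^ (k + 1) - h ^ (k + 1), 0, by ring⟩, ⟨g * f ^ k, -(g * h ^ k), by ring⟩,
      ⟨0, f ^ (k + 1) - g ^ (k + 1), by ring⟩⟩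

-- For `u = t * (f ^ n - g ^ n) + s * (g ^ n - h ^ n)`, membership in `(f, g)` puts `s` into
-- `(f, g)`, membership in `(g, h)` puts `t` into `(g, h)`, and membership in `(f, h)` then relates
-- the `g`-coefficients of `s` and `t` modulo `(f, h)`.
theorem inf_le_fermatIdeal (hn : n ≠ 0) (hf : IsSMulRegular (A ⧸ Ideal.span {g, h}) f)
    (hg : IsSMulRegular (A ⧸ Ideal.span {f, h}) g)
    (hh : IsSMulRegular (A ⧸ Ideal.span {f, g}) h) :
    Ideal.span {f ^ n - g ^ n, g ^ n - h ^ n} ⊓ Ideal.span {f, g} ⊓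
      Ideal.span {g, h} ⊓ Ideal.span {f, h} ≤ fermatIdeal n f g h := by
  obtain ⟨k, rfl⟩ := Nat.exists_eq_add_one_of_ne_zero hn
  rintro u ⟨⟨⟨huQ, hufg⟩, hugh⟩, hufh⟩
  simp only [SetLike.mem_coe, Ideal.mem_span_pair] at huQ hufg hugh hufh
  obtain ⟨t, s, rfl⟩ := huQ
  obtain ⟨s₁, s₂, rfl⟩ : ∃ a b, a * f + b * g = s := by
    obtain ⟨a, b, hab⟩ := hufg
    refine Ideal.mem_span_pair.1 (mem_of_pow_mul_mem (N := k + 1) hh ?_)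
    exact Ideal.mem_span_pair.2
      ⟨t * f ^ k - a, (s - t) * g ^ k - b, by linear_combination -hab⟩
  obtain ⟨t₁, t₂, rfl⟩ : ∃ a b, a * g + b * h = t := by
    obtain ⟨a, b, hab⟩ := hugh
    refine Ideal.mem_span_pair.1 (mem_of_pow_mul_mem (N := k + 1) hf ?_)
    exact Ideal.mem_span_pair.2
      ⟨a - (s₁ * f + s₂ * g - t) * g ^ k, b + (s₁ * f + s₂ * g) * h ^ k,
        by linear_combination hab⟩
  obtain ⟨p, q, hpq⟩ : ∃ p q, p * f + q * h = s₂ - t₁ := by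
    obtain ⟨a, b, hab⟩ := hufh
    refine Ideal.mem_span_pair.1 (mem_of_pow_mul_mem (N := k + 2) hg ?_)
    exact Ideal.mem_span_pair.2
      ⟨a - (t₁ * g + t₂ * h) * f ^ k - s₁ * g ^ (k + 1),
        b + (s₁ * f + s₂ * g) * h ^ k + t₂ * g ^ (k + 1), by linear_combination hab⟩
  obtain ⟨hI₁, hI₂, hI₃⟩ := fermatIdeal_le_iff.1 (le_refl (fermatIdeal (k + 1) f g h))
  convert add_mem (add_mem (Ideal.mul_mem_left _ (s₁ + p * g) hI₁)
    (Ideal.mul_mem_left _ (t₁ + q * h) hI₂)) (Ideal.mul_mem_left _ (t₂ - q * g) hI₃) using 1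
  linear_combination -(g * (g ^ (k + 1) - h ^ (k + 1))) * hpq

theorem mem_fermatIdeal_of_pow_mul_mem (hn : n ≠ 0)
    (hf : IsSMulRegular (A ⧸ Ideal.span {g, h}) f)
    (hg : IsSMulRegular (A ⧸ Ideal.span {f, h}) g)
    (hh : IsSMulRegular (A ⧸ Ideal.span {f, g}) h)
    (hQ : IsSMulRegular (A ⧸ Ideal.span {f ^ n - g ^ n, g ^ n - h ^ n}) f)
    {u : A} (hu : ∀ r ∈ ({f, g, h} : Set A), ∃ N : ℕ, r ^ N * u ∈ fermatIdeal n f g h) :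
    u ∈ fermatIdeal n f g h := by
  have heq := (fermatIdeal_le_inf hn).antisymm (inf_le_fermatIdeal hn hf hg hh)
  obtain ⟨⟨N₁, hN₁⟩, ⟨N₂, hN₂⟩, N₃, hN₃⟩ :
    (∃ N : ℕ, f ^ N * u ∈ fermatIdeal n f g h) ∧ (∃ N : ℕ, g ^ N * u ∈ fermatIdeal n f g h) ∧
    (∃ N : ℕ, h ^ N * u ∈ fermatIdeal n f g h) := by simpa using hu
  rw [heq] at hN₁ hN₂ hN₃ ⊢
  exact ⟨⟨⟨mem_of_pow_mul_mem hQ hN₁.1.1.1, mem_of_pow_mul_mem hh hN₃.1.1.2⟩,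
    mem_of_pow_mul_mem hf hN₁.1.2⟩, mem_of_pow_mul_mem hg hN₂.2⟩

end Saturation

section Flat

variable {A B : Type*} [CommRing A] [CommRing B]

theorem isSMulRegular_quotient_map {φ : A →+* B} (hφ : φ.Flat) {I : Ideal A} {a : A}
    (ha : IsSMulRegular (A ⧸ I) a) : IsSMulRegular (B ⧸ I.map φ) (φ a) := by
  algebraize [φ]
  exact (Algebra.TensorProduct.quotIdealMapEquivTensorQuot B I).toLinearEquiv.isSMulRegular_congr
    (φ a) |>.2 (ha.of_flat_of_isBaseChange (TensorProduct.isBaseChange A (A ⧸ I) B))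

theorem isSMulRegular_quotient_span_pair_map {φ : A →+* B} (hφ : φ.Flat) {a b c : A}
    (hc : IsSMulRegular (A ⧸ Ideal.span {a, b}) c) :
    IsSMulRegular (B ⧸ Ideal.span {φ a, φ b}) (φ c) := by
  rw [← Set.image_pair, ← Ideal.map_span]
  exact isSMulRegular_quotient_map hφ hc

theorem mem_of_map_mem_map {φ : A →+* B} (hφ : φ.FaithfullyFlat) {I : Ideal A} {a : A}
    (ha : φ a ∈ I.map φ) : a ∈ I := by
  algebraize [φ]
  rw [← Ideal.comap_map_eq_self_of_faithfullyFlat (B := B) I]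
  exact ha

theorem faithfullyFlat_of_finsupp_addEquiv {ι : Type*} [Nonempty ι] {φ : A →+* B}
    (e : (ι →₀ A) ≃+ B) (he : ∀ (a : A) (c : ι →₀ A), e (a • c) = φ a * e c) :
    φ.FaithfullyFlat := by
  algebraize [φ]
  let e' : (ι →₀ A) ≃ₗ[A] B :=
    { e with
      map_smul' a c := (he a c).trans (Algebra.smul_def a (e c)).symm }
  exact Module.FaithfullyFlat.of_linearEquiv _ _ e'.symm

end Flat

section Poly

variable {σ K : Type*} [CommRing K]

theorem isSMulRegular_X_quotient_span_monomial {s : Set (σ →₀ ℕ)} {l : σ}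
    (hs : ∀ m ∈ s, m l = 0) :
    IsSMulRegular (MvPolynomial σ K ⧸ Ideal.span ((fun m => monomial m (1 : K)) '' s))
      (X l : MvPolynomial σ K) := by
  classical
  rw [isSMulRegular_quotient_iff_mem_of_smul_mem]
  intro u hu
  rw [mem_ideal_span_monomial_image] at hu ⊢
  intro m hm
  obtain ⟨d, hd, hle⟩ := hu (m + Finsupp.single l 1) <| by
    rwa [mem_support_iff, smul_eq_mul, mul_comm, coeff_mul_X, ← mem_support_iff]
  refine ⟨d, hd, fun i => ?_⟩
  obtain rfl | hil := eq_or_ne i l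
  · simp [hs d hd]
  · simpa [hil.symm] using hle i

theorem isSMulRegular_X_quotient_span_X {i l : σ} (hil : i ≠ l) :
    IsSMulRegular (MvPolynomial σ K ⧸ Ideal.span {(X i : MvPolynomial σ K)})
      (X l : MvPolynomial σ K) := by
  have hX := isSMulRegular_X_quotient_span_monomial (K := K) (s := {Finsupp.single i 1}) (l := l)
    (by simp [hil])
  rwa [Set.image_singleton] at hX

theorem isSMulRegular_X_quotient_span_X_pair {i j l : σ} (hil : i ≠ l) (hjl : j ≠ l) (k : ℕ) :
    IsSMulRegular (MvPolynomial σ K ⧸ Ideal.span {(X i : MvPolynomial σ K), X j ^ k})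
      (X l : MvPolynomial σ K) := by
  have hX := isSMulRegular_X_quotient_span_monomial (K := K)
    (s := {Finsupp.single i 1, Finsupp.single j k}) (l := l) (by simp [hil, hjl])
  rwa [Set.image_pair, ← X, ← X_pow_eq_monomial] at hX

end Poly

section Degenerate

variable {A : Type*} [CommRing A] {n : ℕ} {f g h : A}

theorem fermatIdeal_sq_eq_bot (hn : n ≠ 0) (hf : f ^ (n + 1) = 0) (hgh : g * h = 0)
    (hg : g ^ (2 * n) + h ^ (2 * n) = 0) : fermatIdeal n f g h ^ 2 = ⊥ := by
  obtain ⟨k, rfl⟩ := Nat.exists_eq_add_one_of_ne_zero hn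
  have hv : g * (f ^ (k + 1) - h ^ (k + 1)) = g * f ^ (k + 1) := by
    linear_combination -h ^ k * hgh
  have hw : h * (f ^ (k + 1) - g ^ (k + 1)) = h * f ^ (k + 1) := by
    linear_combination -g ^ k * hgh
  have hsq : (g ^ (k + 1) - h ^ (k + 1)) ^ 2 = 0 := by
    linear_combination hg - 2 * (g * h) ^ k * hgh
  rw [pow_two, fermatIdeal, hv, hw, Ideal.span_mul_span', Ideal.span_eq_bot]
  rintro _ ⟨a, rfl | rfl | rfl, b, rfl | rfl | rfl, rfl⟩
  · linear_combination f ^ 2 * hsq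
  · linear_combination (g ^ (k + 1) - h ^ (k + 1)) * g * hf
  · linear_combination (g ^ (k + 1) - h ^ (k + 1)) * h * hf
  · linear_combination (g ^ (k + 1) - h ^ (k + 1)) * g * hf
  · linear_combination g ^ 2 * f ^ k * hf
  · linear_combination g * h * f ^ k * hf
  · linear_combination (g ^ (k + 1) - h ^ (k + 1)) * h * hf
  · linear_combination g * h * f ^ k * hf
  · linear_combination h ^ 2 * f ^ k * hf

theorem fermatLines_eq_two_mul (hn : n ≠ 0) (hf : f ^ (n + 1) = 0) (hgh : g * h = 0)
    (hg : g ^ (2 * n) + h ^ (2 * n) = 0) : fermatLines n f g h = 2 * (f ^ n * h ^ (2 * n)) := by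
  obtain ⟨k, rfl⟩ := Nat.exists_eq_add_one_of_ne_zero hn
  simp only [fermatLines]
  linear_combination f ^ k * (g ^ (k + 1) - h ^ (k + 1)) * hf - f ^ (k + 1) * hg +
    (g * h) ^ k * (g ^ (k + 1) - h ^ (k + 1)) * hgh

end Degenerate

section NotMem

variable {K : Type*} [CommRing K] {n : ℕ}

variable (K n) in
/-- The ideal `(x^(n+1), yz, y^(2n) + z^(2n))` of `K[x, y, z]`, modulo which the square of the
Fermat ideal vanishes while the product of the Fermat lines need not. -/
noncomputable def degenerationIdeal : Ideal (MvPolynomial (Fin 3) K) :=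
  Ideal.span {X 0 ^ (n + 1), X 1 * X 2, X 1 ^ (2 * n) + X 2 ^ (2 * n)}

theorem coeff_eq_coeff_of_mem_degenerationIdeal (hn : n ≠ 0) {p : MvPolynomial (Fin 3) K}
    (hp : p ∈ degenerationIdeal K n) :
    coeff (.single 0 n + .single 1 (2 * n)) p = coeff (.single 0 n + .single 2 (2 * n)) p := by
  obtain ⟨a, b, c, rfl⟩ := Submodule.mem_span_triple.1 hp
  rw [X, X, X, monomial_mul]
  simp only [smul_eq_mul, monomial_pow, one_pow, coeff_add, mul_add, coeff_mul_monomial']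
  simp [Finsupp.le_def, Fin.forall_fin_succ, hn]

theorem two_mul_X_pow_mul_X_pow_notMem_degenerationIdeal (h2 : (2 : K) ≠ 0) (hn : n ≠ 0) :
    2 * (X 0 ^ n * X 2 ^ (2 * n)) ∉ degenerationIdeal K n := by
  intro hmem
  have hmonomial : (2 * (X 0 ^ n * X 2 ^ (2 * n)) : MvPolynomial (Fin 3) K) =
      monomial (.single 0 n + .single 2 (2 * n)) 2 := by
    rw [X_pow_eq_monomial, X_pow_eq_monomial, monomial_mul, ← map_ofNat C 2, C_mul_monomial,
      mul_one, mul_one]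
  have hcoeff := coeff_eq_coeff_of_mem_degenerationIdeal hn hmem
  have hne : (Finsupp.single 2 (2 * n) : Fin 3 →₀ ℕ) ≠ .single 1 (2 * n) :=
    (Finsupp.single_left_inj (by lia)).not.2 (by decide)
  rw [hmonomial, coeff_monomial, coeff_monomial, if_pos rfl,
    if_neg ((add_right_injective _).ne hne)] at hcoeff
  exact h2 hcoeff.symm

theorem fermatLines_X_notMem_fermatIdeal_sq (h2 : (2 : K) ≠ 0) (hn : n ≠ 0) :
    fermatLines n (X 0) (X 1) (X 2) ∉
      (fermatIdeal n (X 0) (X 1) (X 2) : Ideal (MvPolynomial (Fin 3) K)) ^ 2 := by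
  intro hmem
  let π := Ideal.Quotient.mk (degenerationIdeal K n)
  have π_eq_zero {p : MvPolynomial (Fin 3) K}
      (hp : p ∈ ({X 0 ^ (n + 1), X 1 * X 2, X 1 ^ (2 * n) + X 2 ^ (2 * n)} : Set _)) : π p = 0 :=
    Ideal.Quotient.eq_zero_iff_mem.2 (Ideal.subset_span hp)
  have hf : π (X 0) ^ (n + 1) = 0 := by
    rw [← map_pow, π_eq_zero (by simp)]
  have hgh : π (X 1) * π (X 2) = 0 := by
    rw [← map_mul, π_eq_zero (by simp)]
  have hg : π (X 1) ^ (2 * n) + π (X 2) ^ (2 * n) = 0 := by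
    rw [← map_pow, ← map_pow, ← map_add, π_eq_zero (by simp)]
  refine two_mul_X_pow_mul_X_pow_notMem_degenerationIdeal h2 hn
    (Ideal.Quotient.eq_zero_iff_mem.1 ?_)
  calc π (2 * (X 0 ^ n * X 2 ^ (2 * n)))
      = π (fermatLines n (X 0) (X 1) (X 2)) := by
        rw [map_fermatLines, fermatLines_eq_two_mul hn hf hgh hg]
        simp only [map_mul, map_pow, map_ofNat]
    _ = 0 := by
        rw [← Ideal.mem_bot, ← fermatIdeal_sq_eq_bot hn hf hgh hg, ← map_fermatIdeal,
          ← Ideal.map_pow]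
        exact Ideal.mem_map_of_mem π hmem

end NotMem

section Expand

variable {σ : Type*} [Finite σ] (p : ℕ) [NeZero p]

/-- Division with remainder by `p` in each exponent: `(r, q)` corresponds to `p • q + r`. -/
noncomputable def exponentModDivEquiv : (_ : σ → Fin p) × (σ →₀ ℕ) ≃ (σ →₀ ℕ) :=
  calc (_ : σ → Fin p) × (σ →₀ ℕ)
    _ ≃ (σ → Fin p) × (σ → ℕ) :=
      (Equiv.sigmaEquivProd _ _).trans ((Equiv.refl _).prodCongr Finsupp.equivFunOnFinite)
    _ ≃ (σ → ℕ) × (σ → Fin p) := Equiv.prodComm _ _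
    _ ≃ (σ → ℕ × Fin p) := (Equiv.arrowProdEquivProdArrow σ _ _).symm
    _ ≃ (σ → ℕ) := Equiv.piCongrRight fun _ => (Nat.divModEquiv p).symm
    _ ≃ (σ →₀ ℕ) := Finsupp.equivFunOnFinite.symm

theorem exponentModDivEquiv_apply (r : σ → Fin p) (q : σ →₀ ℕ) :
    exponentModDivEquiv p ⟨r, q⟩ =
      p • q + Finsupp.equivFunOnFinite.symm fun i => (r i : ℕ) := by
  ext i
  exact congrArg (· + (r i : ℕ)) (mul_comm (q i) p)

variable (σ) (K : Type*) [CommRing K]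

/-- `K[x₁, …, x_d]` is free over its subring of polynomials in the `x_i ^ p`, with basis the
monomials all of whose exponents are less than `p`; this is the decomposition in that basis. -/
noncomputable def expandEquiv :
    ((σ → Fin p) →₀ MvPolynomial σ K) ≃ₗ[K] MvPolynomial σ K :=
  (Finsupp.basis fun _ => basisMonomials σ K).equiv (basisMonomials σ K) (exponentModDivEquiv p)

variable {σ K}

theorem expandEquiv_single (r : σ → Fin p) (a : MvPolynomial σ K) :
    expandEquiv σ p K (.single r a) =
      expand p a * monomial (Finsupp.equivFunOnFinite.symm fun i => (r i : ℕ)) 1 := by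
  suffices h : (expandEquiv σ p K).toLinearMap ∘ₗ Finsupp.lsingle r =
      (LinearMap.mulRight K (monomial (Finsupp.equivFunOnFinite.symm fun i => (r i : ℕ)) 1)) ∘ₗ
        (expand p).toLinearMap from LinearMap.congr_fun h a
  refine (basisMonomials σ K).ext fun q => ?_
  have := (Finsupp.basis fun _ : σ → Fin p => basisMonomials σ K).equiv_apply ⟨r, q⟩
    (basisMonomials σ K) (exponentModDivEquiv p)
  simpa [expandEquiv, exponentModDivEquiv_apply] using this

theorem faithfullyFlat_expand :
    (expand p : MvPolynomial σ K →ₐ[K] MvPolynomial σ K).toRingHom.FaithfullyFlat := by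
  refine faithfullyFlat_of_finsupp_addEquiv (expandEquiv σ p K).toAddEquiv fun a c => ?_
  induction c using Finsupp.induction_linear with
  | zero => simp
  | add c d hc hd => rw [smul_add, map_add, hc, hd, map_add, mul_add]
  | single r b =>
    have key : expandEquiv σ p K (a • .single r b) =
        expand p a * expandEquiv σ p K (.single r b) := by
      rw [Finsupp.smul_single, smul_eq_mul, expandEquiv_single, expandEquiv_single, map_mul,
        mul_assoc]
    exact key

end Expand

section Quadrics

variable (K : Type*) [CommRing K] [Invertible (2 : K)]

/-- The change of coordinates `x ↦ x + y`, `y ↦ y + z`, `z ↦ x + z` of `K[x, y, z]`. -/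
noncomputable def pairwiseSumEquiv : MvPolynomial (Fin 3) K ≃ₐ[K] MvPolynomial (Fin 3) K :=
  have half_mul_two : C ⅟2 * 2 = (1 : MvPolynomial (Fin 3) K) := by
    rw [← map_ofNat C 2, ← C_mul, invOf_mul_self, C_1]
  AlgEquiv.ofAlgHom (aeval ![X 0 + X 1, X 1 + X 2, X 0 + X 2])
    (aeval ![C ⅟2 * (X 0 + X 2 - X 1), C ⅟2 * (X 0 + X 1 - X 2), C ⅟2 * (X 1 + X 2 - X 0)])
    (algHom_ext fun i => by
      fin_cases i <;> simp only [AlgHom.comp_apply, AlgHom.id_apply, aeval_X, algHom_C,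
        algebraMap_eq, map_mul, map_sub, map_add, Matrix.cons_val, Fin.reduceFinMk]
      · linear_combination X 0 * half_mul_two
      · linear_combination X 1 * half_mul_two
      · linear_combination X 2 * half_mul_two)
    (algHom_ext fun i => by
      fin_cases i <;> simp only [AlgHom.comp_apply, AlgHom.id_apply, aeval_X, map_add,
        Matrix.cons_val, Fin.reduceFinMk]
      · linear_combination X 0 * half_mul_two
      · linear_combination X 1 * half_mul_two
      · linear_combination X 2 * half_mul_two)

theorem aeval_sum_two_squares :
    (aeval ![X 0 ^ 2 + X 1 ^ 2, X 1 ^ 2 + X 2 ^ 2, X 0 ^ 2 + X 2 ^ 2] :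
      MvPolynomial (Fin 3) K →ₐ[K] MvPolynomial (Fin 3) K) =
      (expand 2).comp (pairwiseSumEquiv K) := by
  apply algHom_ext
  intro i
  fin_cases i <;> simp [pairwiseSumEquiv]

theorem faithfullyFlat_aeval_sum_two_squares :
    (aeval ![X 0 ^ 2 + X 1 ^ 2, X 1 ^ 2 + X 2 ^ 2, X 0 ^ 2 + X 2 ^ 2] :
      MvPolynomial (Fin 3) K →ₐ[K] MvPolynomial (Fin 3) K).toRingHom.FaithfullyFlat := by
  rw [aeval_sum_two_squares]
  exact RingHom.FaithfullyFlat.stableUnderComposition _ _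
    (.of_bijective (pairwiseSumEquiv K).bijective) (faithfullyFlat_expand 2)

end Quadrics

section General

variable {K A : Type*} [CommRing K] [CommRing A] {n : ℕ}

theorem mem_fermatIdeal_map_X_of_pow_mul_mem (hn : n ≠ 0) {φ : MvPolynomial (Fin 3) K →+* A}
    (hφ : φ.Flat) {u : A} (hu : ∀ r ∈ ({φ (X 0), φ (X 1), φ (X 2)} : Set A),
      ∃ N : ℕ, r ^ N * u ∈ fermatIdeal n (φ (X 0)) (φ (X 1)) (φ (X 2))) :
    u ∈ fermatIdeal n (φ (X 0)) (φ (X 1)) (φ (X 2)) := by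
  have hpair {i j l : Fin 3} (hil : i ≠ l) (hjl : j ≠ l) :
      IsSMulRegular (A ⧸ Ideal.span {φ (X i), φ (X j)}) (φ (X l)) := by
    have hX := isSMulRegular_X_quotient_span_X_pair (K := K) hil hjl 1
    rw [pow_one] at hX
    exact isSMulRegular_quotient_span_pair_map hφ hX
  have hX : IsSMulRegular (MvPolynomial (Fin 3) K) (X 0 : MvPolynomial (Fin 3) K) :=
    isRegular_X.left
  have hdiff := isSMulRegular_quotient_span_pair_map hφ <|
    isSMulRegular_quotient_span_pow_sub_pow hn hX
      (isSMulRegular_X_quotient_span_X (l := 1) (by decide))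
      (isSMulRegular_X_quotient_span_X_pair (l := 2) (by decide) (by decide) n)
  rw [map_sub, map_sub, map_pow, map_pow, map_pow] at hdiff
  exact mem_fermatIdeal_of_pow_mul_mem hn (hpair (by decide) (by decide))
    (hpair (by decide) (by decide)) (hpair (by decide) (by decide)) hdiff hu

theorem map_fermatLines_X_mem_symbolicPower (hn : 3 ≤ n) {φ : MvPolynomial (Fin 3) K →+* A}
    (hφ : φ.Flat) :
    φ (fermatLines n (X 0) (X 1) (X 2)) ∈
      symbolicPower ((fermatIdeal n (X 0) (X 1) (X 2)).map φ) 3 := by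
  rw [map_fermatLines, map_fermatIdeal, mem_symbolicPower_iff]
  intro P hP
  have : P.IsPrime := hP.1
  exact exists_mul_fermatLines_mem_fermatIdeal_cube hn (le_of_mem_associatedPrimes_quotient hP) <|
    not_subset_of_mem_associatedPrimes_quotient
      (fun _ => mem_fermatIdeal_map_X_of_pow_mul_mem (by lia) hφ) hP

theorem map_fermatLines_X_notMem_map_fermatIdeal_sq (h2 : (2 : K) ≠ 0) (hn : n ≠ 0)
    {φ : MvPolynomial (Fin 3) K →+* A} (hφ : φ.FaithfullyFlat) :
    φ (fermatLines n (X 0) (X 1) (X 2)) ∉ (fermatIdeal n (X 0) (X 1) (X 2)).map φ ^ 2 := by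
  rw [← Ideal.map_pow]
  exact mt (mem_of_map_mem_map hφ) (fermatLines_X_notMem_fermatIdeal_sq h2 hn)

theorem stmt15_general (h2 : (2 : K) ≠ 0) (hn : 3 ≤ n) {φ : MvPolynomial (Fin 3) K →+* A}
    (hφ : φ.FaithfullyFlat) :
    ¬ symbolicPower ((fermatIdeal n (X 0) (X 1) (X 2)).map φ) 3 ≤
      (fermatIdeal n (X 0) (X 1) (X 2)).map φ ^ 2 :=
  fun hle => map_fermatLines_X_notMem_map_fermatIdeal_sq h2 (by lia) hφ
    (hle (map_fermatLines_X_mem_symbolicPower hn hφ.flat))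

end General

/-- With `f = x²+y²`, `g = y²+z²`, `h = x²+z²`, the ideal
`φ_*(I) = (f(g³−h³), g(f³−h³), h(f³−g³)) ⊆ ℂ[x,y,z]`, the image of the dual Hesse
configuration ideal under `φ : x ↦ f, y ↦ g, z ↦ h`, satisfies `φ_*(I)^(3) ⊄ φ_*(I)²`. -/
theorem stmt15 :
    let f : MvPolynomial (Fin 3) ℂ := X 0 ^ 2 + X 1 ^ 2
    let g : MvPolynomial (Fin 3) ℂ := X 1 ^ 2 + X 2 ^ 2
    let h : MvPolynomial (Fin 3) ℂ := X 0 ^ 2 + X 2 ^ 2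
    let J : Ideal (MvPolynomial (Fin 3) ℂ) :=
      Ideal.span {f * (g ^ 3 - h ^ 3), g * (f ^ 3 - h ^ 3), h * (f ^ 3 - g ^ 3)}
    ¬ symbolicPower J 3 ≤ J ^ 2 := by
  have h := stmt15_general two_ne_zero le_rfl (faithfullyFlat_aeval_sum_two_squares ℂ) (n := 3)
  rw [map_fermatIdeal] at h
  simpa [fermatIdeal] using h
end
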